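/- arXiv:1508.05461 — 2 statements merged into one kernel-verified Lean document; each statement's English description precedes it below -/
import Mathlib

section
/- Let A ∈ R^{r×n} be a normal matrix with columns a_1,…,a_n, with a_n nonzero. Then the matrix P_{a_n}A, obtained by orthogonally projecting each column onto the hyperplane orthogonal to a_n, is normal. -/
open Matrix

/-- Nonnegative real cone generated by the columns of `A`. -/
def MCone {ι κ : Type*} [Fintype κ] (A : Matrix ι κ ℝ) : Set (ι → ℝ) :=
  {b | ∃ x : κ → ℝ, (∀ j, 0 ≤ x j) ∧ A.mulVec x = b}

/-- Lattice (integer span) generated by the columns of `A`. -/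
def MZSpan {ι κ : Type*} [Fintype κ] (A : Matrix ι κ ℝ) : Set (ι → ℝ) :=
  {b | ∃ z : κ → ℤ, A.mulVec (fun j => (z j : ℝ)) = b}

/-- Affine semigroup (nonnegative integer span) generated by the columns of `A`. -/
def MNSpan {ι κ : Type*} [Fintype κ] (A : Matrix ι κ ℝ) : Set (ι → ℝ) :=
  {b | ∃ x : κ → ℕ, A.mulVec (fun j => (x j : ℝ)) = b}

/-- `A` is normal if `ℤA ∩ ℝ≥0 A = ℕ A`. -/
def MNormal {ι κ : Type*} [Fintype κ] (A : Matrix ι κ ℝ) : Prop :=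
  MZSpan A ∩ MCone A = MNSpan A

/-- The orthogonal projection matrix onto the hyperplane orthogonal to `v`. -/
noncomputable def projMat {r : ℕ} (v : Fin r → ℝ) : Matrix (Fin r) (Fin r) ℝ :=
  1 - (∑ i, v i * v i)⁻¹ • Matrix.vecMulVec v v

/-!
Suppose the kernel of `P` is spanned by some of the columns of `A`, and let `b = P A z = P A x` with
`z` integral and `x ≥ 0`. Then `A z = A (x + c)` for a real vector `c` supported on those columns.
Adding sufficiently large natural multiples of the same columns makes `x + c` nonnegative and moves
`A z` into `ℤA ∩ ℝ≥0A = ℕA`, while `P` does not see the change; hence `b ∈ ℕ(PA)`. The projection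
along `a_n` has kernel `ℝ a_n`.
-/

theorem mnSpan_subset_mzSpan_inter_mCone {ι κ : Type*} [Fintype κ] (A : Matrix ι κ ℝ) :
    MNSpan A ⊆ MZSpan A ∩ MCone A := by
  rintro b ⟨m, hm⟩
  exact ⟨⟨fun j => m j, by simpa using hm⟩, fun j => m j, fun j => (m j).cast_nonneg, hm⟩

theorem mem_span_col_image_iff {R ι κ : Type*} [CommSemiring R] [Fintype κ] {A : Matrix ι κ R}
    {s : Set κ} {w : ι → R} :
    w ∈ Submodule.span R (A.col '' s) ↔ ∃ c : κ → R, Function.support c ⊆ s ∧ A *ᵥ c = w := by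
  have mulVec_eq (l : κ →₀ R) : Finsupp.linearCombination R A.col l = A *ᵥ l := by
    rw [Finsupp.linearCombination_apply, l.sum_fintype _ (fun j => zero_smul R (A.col j))]
    ext i
    simp [mulVec_eq_sum, mul_comm]
  rw [Finsupp.mem_span_image_iff_linearCombination]
  refine Finsupp.equivFunOnFinite.exists_congr fun l => ?_
  rw [Finsupp.mem_supported, ← Finsupp.fun_support_eq, mulVec_eq]
  rfl

theorem MNormal.mul_of_ker_eq_span {ι ι' κ : Type*} [Fintype ι] [Fintype κ] {A : Matrix ι κ ℝ}
    (hA : MNormal A) {P : Matrix ι' ι ℝ} {s : Set κ}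
    (hP : LinearMap.ker P.mulVecLin = Submodule.span ℝ (A.col '' s)) : MNormal (P * A) := by
  refine (mnSpan_subset_mzSpan_inter_mCone _).antisymm' ?_
  rintro b ⟨⟨z, hz⟩, x, hx₀, hx⟩
  rw [← mulVec_mulVec] at hz hx
  have hker : A *ᵥ (fun j => (z j : ℝ)) - A *ᵥ x ∈ LinearMap.ker P.mulVecLin := by
    simp [mulVec_sub, hz, hx]
  obtain ⟨c, hcs, hc⟩ := mem_span_col_image_iff.1 (hP ▸ hker)
  let m : κ → ℕ := fun j => ⌈-c j⌉₊
  have hPm : P *ᵥ (A *ᵥ fun j => (m j : ℝ)) = 0 := by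
    have hms : Function.support (fun j => (m j : ℝ)) ⊆ s :=
      Function.support_subset_iff'.2 fun j hj => by
        simp [m, Function.support_subset_iff'.1 hcs j hj]
    exact LinearMap.mem_ker.1 (hP ▸ mem_span_col_image_iff.2 ⟨_, hms, rfl⟩)
  have hZ : A *ᵥ (fun j => (z j : ℝ)) + A *ᵥ (fun j => (m j : ℝ)) ∈ MZSpan A :=
    ⟨fun j => z j + m j, by rw [← mulVec_add]; congr; ext j; simp⟩
  have hC : A *ᵥ (fun j => (z j : ℝ)) + A *ᵥ (fun j => (m j : ℝ)) ∈ MCone A := by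
    refine ⟨x + (c + fun j => (m j : ℝ)), fun j => ?_, ?_⟩
    · change 0 ≤ x j + (c j + m j)
      linarith [hx₀ j, Nat.le_ceil (-c j)]
    · rw [eq_add_of_sub_eq' hc.symm, mulVec_add, mulVec_add, add_assoc]
  obtain ⟨k, hk⟩ := Eq.subset hA ⟨hZ, hC⟩
  exact ⟨k, by rw [← mulVec_mulVec, hk, mulVec_add, hPm, add_zero, hz]⟩

theorem projMat_mulVec {r : ℕ} (v w : Fin r → ℝ) :
    projMat v *ᵥ w = w - ((v ⬝ᵥ v)⁻¹ * (v ⬝ᵥ w)) • v := by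
  rw [projMat, sub_mulVec, one_mulVec, smul_mulVec, vecMulVec_mulVec, op_smul_eq_smul, smul_smul]
  rfl

theorem ker_mulVecLin_projMat {r : ℕ} {v : Fin r → ℝ} (hv : v ≠ 0) :
    LinearMap.ker (projMat v).mulVecLin = Submodule.span ℝ {v} := by
  have hvv : v ⬝ᵥ v ≠ 0 := dotProduct_self_eq_zero.not.2 hv
  refine le_antisymm (fun w hw => ?_) ?_
  · rw [LinearMap.mem_ker, mulVecLin_apply, projMat_mulVec, sub_eq_zero] at hw
    exact Submodule.mem_span_singleton.2 ⟨_, hw.symm⟩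
  · simp [projMat_mulVec, hvv]

theorem normal_proj_last_column_general {r : ℕ} {κ : Type*} [Fintype κ] (A : Matrix (Fin r) κ ℝ)
    (hA : MNormal A) (j : κ) (ha : A.col j ≠ 0) : MNormal (projMat (A.col j) * A) :=
  hA.mul_of_ker_eq_span (s := {j}) (by rw [ker_mulVecLin_projMat ha, Set.image_singleton])

/-- Projecting a normal matrix orthogonally along its last column preserves normality. -/
theorem normal_proj_last_column {r n : ℕ} (A : Matrix (Fin r) (Fin (n + 1)) ℝ)
    (hA : MNormal A) (ha : (fun i => A i (Fin.last n)) ≠ 0) :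
    MNormal (projMat (fun i => A i (Fin.last n)) * A) :=
  normal_proj_last_column_general A hA (Fin.last n) ha
end

section
/- Let n ≥ 3 and let C be the simplicial complex on vertices {0,1,…,n} whose facets are {0,n} and all (n−1)-element subsets of {0,…,n} not containing both 0 and n. Then the binary hierarchical matrix A_C is not normal: the vector b = (1/4)·Σ_i a_i, summing over all columns a_i of A_C, lies in ZA_C ∩ R≥0A_C but not in NA_C. -/
/-!
Let `a = 0` and `b = N` be the two special vertices, and let `χ_S` be the Walsh character of a
vertex set `S`. Since `χ_S` has vanishing `F`-marginals unless `S ⊆ F`, for distinct vertices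
`p, q ∉ {a, b}` the integer table `(1 + χ_{aᶜ}) (1 + χ_{bᶜ}) - χ_{a,b} (1 + χ_p) (1 + χ_q)` has the
same marginals on the facets as the constant table `1`. Both products have two even factors, so the
table is divisible by `4`, and a quarter of it represents `A (1/4)` as an integer combination.

If `A (1/4) = A x` with `x` natural, the marginal of `x` on each facet of size `N - 1` is constantly
`1`, so the support of `x` has exactly one point over each assignment on such a facet. Two support
points agreeing outside `{a, b, u}` are then equal or differ at both `a` and `b`. As the remaining
coordinates can be changed one at a time, `c a + c b` is constant modulo `2` on the support, so the
marginal of `x` on `{a, b}` has zeros, while that of `1/4` has none.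
-/

open Matrix

/-- The facets of the complex on vertices `{0,…,N}`: the edge `{0,N}` and all
`(N-1)`-element subsets not containing both `0` and `N`. -/
def IsFacet (N : ℕ) (F : Finset (Fin (N + 1))) : Prop :=
  F = {0, Fin.last N} ∨ (F.card = N - 1 ∧ ¬(0 ∈ F ∧ Fin.last N ∈ F))

instance (N : ℕ) : DecidablePred (IsFacet N) := fun _ => by unfold IsFacet; infer_instance

/-- Row indices of the binary hierarchical matrix: a facet `F` together with a
binary assignment on `F`. -/
def RowIdx (N : ℕ) : Type :=
  Σ F : {F : Finset (Fin (N + 1)) // IsFacet N F}, ({v : Fin (N + 1) // v ∈ F.1} → Bool)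

instance (N : ℕ) : Fintype (RowIdx N) := by unfold RowIdx; infer_instance

/-- The binary hierarchical matrix `A_C` of this complex: columns are binary
`(N+1)`-tuples, rows are pairs `(F, j)`, and the entry is `1` iff the column restricted
to `F` equals `j`. -/
def hierMat (N : ℕ) : Matrix (RowIdx N) (Fin (N + 1) → Bool) ℝ :=
  Matrix.of fun r c => if ∀ v : {v : Fin (N + 1) // v ∈ r.1.1}, r.2 v = c v.1 then 1 else 0

section Cylinder

open Finset Function

variable {V α : Type*} [DecidableEq V]

lemma apply_eq_of_forall_update {π : V → Type*} {β : Type*} [Finite V] {f : (∀ v, π v) → β}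
    (h : ∀ c v y, f (update c v y) = f c) (c d : ∀ v, π v) : f c = f d := by
  have := Fintype.ofFinite V
  have h_piecewise (s : Finset V) : f (s.piecewise c d) = f d := by
    induction s using Finset.induction_on with
    | empty => rw [piecewise_empty]
    | insert v s _ ih => rw [piecewise_insert, h, ih]
  simpa using h_piecewise univ

variable [Fintype V] [Fintype α] [DecidableEq α] {F : Finset V} {c d : V → α}

/-- The fibre through `d` of the restriction of tuples to `F`; sums over it are the entries of the
`F`-marginal of a table. -/
def cylinder (F : Finset V) (d : V → α) : Finset (V → α) :=
  {c | ∀ v ∈ F, d v = c v}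

lemma mem_cylinder : c ∈ cylinder F d ↔ ∀ v ∈ F, d v = c v := by
  simp [cylinder]

lemma self_mem_cylinder (F : Finset V) (d : V → α) : d ∈ cylinder F d :=
  mem_cylinder.2 fun _ _ ↦ rfl

lemma mem_cylinder_compl_pair {a b : V} :
    c ∈ cylinder {a, b}ᶜ d ↔ ∀ v, v ≠ a → v ≠ b → d v = c v := by
  simp [mem_cylinder]

lemma card_cylinder (F : Finset V) (d : V → α) :
    #(cylinder F d) = Fintype.card α ^ #Fᶜ := by
  have h_pi : cylinder F d = Fintype.piFinset fun v ↦ if v ∈ Fᶜ then univ else {d v} := by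
    ext c
    simp only [mem_cylinder, Fintype.mem_piFinset, mem_compl]
    refine forall_congr' fun v ↦ ?_
    by_cases hv : v ∈ F <;> simp [hv, eq_comm]
  have h_card (v : V) : #(if v ∈ Fᶜ then univ else {d v}) =
      if v ∈ Fᶜ then Fintype.card α else 1 := by
    split_ifs <;> simp
  rw [h_pi, Fintype.card_piFinset, prod_congr rfl fun v _ ↦ h_card v, prod_ite_mem, univ_inter,
    prod_const]

end Cylinder

section Walsh

open Finset Function
open scoped symmDiff

variable {V : Type*}

/-- The Walsh character `c ↦ (-1) ^ ∑ v ∈ S, c v` of the cube, written as a product of signs. -/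
def walsh (S : Finset V) (c : V → Bool) : ℤ :=
  ∏ v ∈ S, if c v then -1 else 1

lemma even_one_add_walsh (S : Finset V) (c : V → Bool) : Even (1 + walsh S c) := by
  have h_odd : Odd (walsh S c) :=
    prod_induction _ Odd (fun _ _ ↦ Odd.mul) odd_one fun v _ ↦ by split_ifs <;> decide
  exact odd_one.add_odd h_odd

variable [DecidableEq V]

lemma walsh_mul_walsh (S T : Finset V) (c : V → Bool) :
    walsh S c * walsh T c = walsh (S ∆ T) c := by
  have h_restrict {U : Finset V} (hU : U ⊆ S ∪ T) :
      walsh U c = ∏ v ∈ S ∪ T, if v ∈ U then (if c v then -1 else 1) else 1 := by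
    rw [prod_ite_mem, inter_eq_right.2 hU, walsh]
  rw [h_restrict subset_union_left, h_restrict subset_union_right,
    h_restrict symmDiff_le_sup, ← prod_mul_distrib]
  refine prod_congr rfl fun v _ ↦ ?_
  by_cases hS : v ∈ S <;> by_cases hT : v ∈ T <;> cases c v <;> simp [mem_symmDiff, hS, hT]

lemma walsh_mul_walsh_of_disjoint {S T : Finset V} (h : Disjoint S T) (c : V → Bool) :
    walsh S c * walsh T c = walsh (S ∪ T) c :=
  (prod_union h).symm

lemma walsh_update_not {S : Finset V} {v : V} (hv : v ∈ S) (c : V → Bool) :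
    walsh S (update c v (!c v)) = -walsh S c := by
  have h_erase : ∏ u ∈ S.erase v, (if update c v (!c v) u then (-1 : ℤ) else 1) =
      ∏ u ∈ S.erase v, if c u then -1 else 1 :=
    prod_congr rfl fun u hu ↦ by rw [update_of_ne (ne_of_mem_erase hu)]
  rw [walsh, walsh, ← mul_prod_erase S _ hv, ← mul_prod_erase S _ hv, h_erase, update_self,
    ← neg_mul]
  cases c v <;> simp

variable [Fintype V] {a b p q : V}

lemma sum_cylinder_walsh_eq_zero {F S : Finset V} (hSF : ¬ S ⊆ F) (d : V → Bool) :
    ∑ c ∈ cylinder F d, walsh S c = 0 := by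
  obtain ⟨v, hvS, hvF⟩ := not_subset.1 hSF
  refine sum_involution (fun c _ ↦ update c v (!c v)) (fun c _ ↦ ?_) (fun c _ _ h ↦ ?_)
    (fun c hc ↦ ?_) (fun c _ ↦ ?_)
  · rw [walsh_update_not hvS, add_neg_cancel]
  · simpa using congrFun h v
  · rw [mem_cylinder] at hc ⊢
    intro u hu
    rw [update_of_ne (ne_of_mem_of_not_mem hu hvF), hc u hu]
  · simp

/-- A table with entries divisible by `4` that has the marginals of the constant table `1` on the
sets containing none of the nonconstant characters in its Walsh expansion. -/
def walshTable (a b p q : V) (c : V → Bool) : ℤ :=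
  (1 + walsh {a}ᶜ c) * (1 + walsh {b}ᶜ c) - walsh {a, b} c * (1 + walsh {p} c) * (1 + walsh {q} c)

lemma four_dvd_walshTable (a b p q : V) (c : V → Bool) : 4 ∣ walshTable a b p q c := by
  have h_two (S : Finset V) : 2 ∣ 1 + walsh S c := (even_one_add_walsh S c).two_dvd
  have h_last := mul_dvd_mul ((h_two {p}).mul_left (walsh {a, b} c)) (h_two {q})
  exact dvd_sub (mul_dvd_mul (h_two _) (h_two _)) h_last

lemma walshTable_eq (hab : a ≠ b) (hp : p ∉ ({a, b} : Finset V)) (hq : q ∉ ({a, b} : Finset V))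
    (hpq : p ≠ q) (c : V → Bool) :
    walshTable a b p q c = 1 + walsh {a}ᶜ c + walsh {b}ᶜ c - walsh ({a, b} ∪ {p}) c
      - walsh ({a, b} ∪ {q}) c - walsh ({a, b} ∪ {p} ∪ {q}) c := by
  have h_compl : walsh {a}ᶜ c * walsh {b}ᶜ c = walsh {a, b} c := by
    rw [walsh_mul_walsh, compl_symmDiff_compl,
      (disjoint_singleton.2 hab).symmDiff_eq_sup, sup_eq_union, ← insert_eq]
  have hq' : q ∉ ({a, b} ∪ {p} : Finset V) := by simpa [hpq.symm] using hq
  rw [walshTable, ← walsh_mul_walsh_of_disjoint (disjoint_singleton_right.2 hq'),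
    ← walsh_mul_walsh_of_disjoint (disjoint_singleton_right.2 hp),
    ← walsh_mul_walsh_of_disjoint (disjoint_singleton_right.2 hq)]
  linear_combination h_compl

lemma sum_cylinder_walshTable {F : Finset V} (hab : a ≠ b) (hp : p ∉ ({a, b} : Finset V))
    (hq : q ∉ ({a, b} : Finset V)) (hpq : p ≠ q) (haF : ¬ {a}ᶜ ⊆ F) (hbF : ¬ {b}ᶜ ⊆ F)
    (hpF : ¬ {a, b} ∪ {p} ⊆ F) (hqF : ¬ {a, b} ∪ {q} ⊆ F) (d : V → Bool) :
    ∑ c ∈ cylinder F d, walshTable a b p q c = #(cylinder F d) := by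
  have hpqF : ¬ {a, b} ∪ {p} ∪ {q} ⊆ F := fun h ↦ hpF (subset_union_left.trans h)
  simp only [walshTable_eq hab hp hq hpq, sum_sub_distrib, sum_add_distrib,
    sum_cylinder_walsh_eq_zero haF, sum_cylinder_walsh_eq_zero hbF,
    sum_cylinder_walsh_eq_zero hpF, sum_cylinder_walsh_eq_zero hqF,
    sum_cylinder_walsh_eq_zero hpqF, sum_const, nsmul_one, add_zero, sub_zero]

lemma exists_int_four_mul_sum_cylinder_eq_card (hab : a ≠ b) (hp : p ∉ ({a, b} : Finset V))
    (hq : q ∉ ({a, b} : Finset V)) (hpq : p ≠ q) :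
    ∃ z : (V → Bool) → ℤ, ∀ F : Finset V, ¬ {a}ᶜ ⊆ F → ¬ {b}ᶜ ⊆ F → ¬ {a, b} ∪ {p} ⊆ F →
      ¬ {a, b} ∪ {q} ⊆ F → ∀ d, 4 * ∑ c ∈ cylinder F d, z c = #(cylinder F d) := by
  choose z hz using four_dvd_walshTable a b p q
  refine ⟨z, fun F haF hbF hpF hqF d ↦ ?_⟩
  rw [mul_sum, ← sum_cylinder_walshTable hab hp hq hpq haF hbF hpF hqF]
  exact sum_congr rfl fun c _ ↦ (hz c).symm

end Walsh

section InformationSet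

open Finset Function

variable {V α : Type*} [Fintype V] [DecidableEq V] [Fintype α] [DecidableEq α]

/-- `F` is an information set of the code `T`: every assignment on `F` extends to exactly one
element of `T`. -/
def IsInformationSet (F : Finset V) (T : Set (V → α)) : Prop :=
  ∀ d, ∃! c, c ∈ T ∧ c ∈ cylinder F d

lemma IsInformationSet.eq {F : Finset V} {T : Set (V → α)} (hF : IsInformationSet F T)
    {c d : V → α} (hc : c ∈ T) (hd : d ∈ T) (hcd : c ∈ cylinder F d) : c = d :=
  (hF d).unique ⟨hc, hcd⟩ ⟨hd, self_mem_cylinder F d⟩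

lemma isInformationSet_support {F : Finset V} {x : (V → α) → ℕ}
    (hx : ∀ d, ∑ c ∈ cylinder F d, x c = 1) : IsInformationSet F (support x) := by
  intro d
  obtain ⟨c, hc, hxc⟩ : ∃ c ∈ cylinder F d, x c ≠ 0 :=
    exists_ne_zero_of_sum_ne_zero (by rw [hx d]; exact one_ne_zero)
  refine ⟨c, ⟨hxc, hc⟩, fun e ⟨hxe, he⟩ ↦ ?_⟩
  by_contra h_ne
  have h_le : x e + x c ≤ 1 := hx d ▸ add_le_sum (fun _ _ ↦ zero_le) he hc h_ne
  have h_pos : 0 < x e := Nat.pos_of_ne_zero hxe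
  omega

variable {a b : V} {T : Set (V → Bool)}

lemma xor_eq_of_eqOn_compl (hab : a ≠ b) (ha : ∀ v ≠ a, IsInformationSet {a, v}ᶜ T)
    (hb : ∀ v ≠ b, IsInformationSet {b, v}ᶜ T) {c d : V → Bool} (hc : c ∈ T) (hd : d ∈ T) {u : V}
    (hcd : ∀ v, v ≠ a → v ≠ b → v ≠ u → d v = c v) : (c a ^^ c b) = (d a ^^ d b) := by
  by_cases hua : u = a
  · rw [(ha b hab.symm).eq hc hd (mem_cylinder_compl_pair.2 (by grind))]
  by_cases hub : u = b
  · rw [(ha b hab.symm).eq hc hd (mem_cylinder_compl_pair.2 (by grind))]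
  by_cases h_a : d a = c a
  · rw [(hb u hub).eq hc hd (mem_cylinder_compl_pair.2 (by grind))]
  by_cases h_b : d b = c b
  · rw [(ha u hua).eq hc hd (mem_cylinder_compl_pair.2 (by grind))]
  · rw [Bool.eq_not.2 h_a, Bool.eq_not.2 h_b, Bool.not_xor_not]

lemma xor_eq_of_isInformationSet (hab : a ≠ b) (ha : ∀ v ≠ a, IsInformationSet {a, v}ᶜ T)
    (hb : ∀ v ≠ b, IsInformationSet {b, v}ᶜ T) {c d : V → Bool} (hc : c ∈ T) (hd : d ∈ T) :
    (c a ^^ c b) = (d a ^^ d b) := by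
  choose f hf _ using ha b hab.symm
  have hf_self {e : V → Bool} (he : e ∈ T) : f e = e :=
    (ha b hab.symm).eq (hf e).1 he (hf e).2
  have h_update (e : V → Bool) (v : V) (y : Bool) :
      (f (update e v y) a ^^ f (update e v y) b) = (f e a ^^ f e b) := by
    refine xor_eq_of_eqOn_compl hab ha hb (hf _).1 (hf e).1 (u := v) fun w hwa hwb hwv ↦ ?_
    rw [← mem_cylinder_compl_pair.1 (hf e).2 w hwa hwb,
      ← mem_cylinder_compl_pair.1 (hf _).2 w hwa hwb, update_of_ne hwv]
  have h_const := apply_eq_of_forall_update (f := fun e ↦ f e a ^^ f e b) h_update c d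
  simpa only [hf_self hc, hf_self hd] using h_const

lemma not_forall_four_mul_sum_cylinder_eq_card (hab : a ≠ b) (x : (V → Bool) → ℕ)
    (ha : ∀ v ≠ a, ∀ d, 4 * ∑ c ∈ cylinder {a, v}ᶜ d, x c = #(cylinder {a, v}ᶜ d))
    (hb : ∀ v ≠ b, ∀ d, 4 * ∑ c ∈ cylinder {b, v}ᶜ d, x c = #(cylinder {b, v}ᶜ d)) :
    ¬ ∀ d, 4 * ∑ c ∈ cylinder {a, b} d, x c = #(cylinder {a, b} d) := by
  intro h_pair
  have h_info {e v : V} (hve : v ≠ e)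
      (h : ∀ d, 4 * ∑ c ∈ cylinder {e, v}ᶜ d, x c = #(cylinder {e, v}ᶜ d)) :
      IsInformationSet {e, v}ᶜ (support x) :=
    isInformationSet_support fun d ↦ by
      have h_four := h d
      rw [card_cylinder, compl_compl, card_pair hve.symm, Fintype.card_bool] at h_four
      omega
  have h_meets (d : V → Bool) : ∃ c ∈ support x, d a = c a ∧ d b = c b := by
    have h_pos : 0 < #(cylinder {a, b} d) := card_pos.2 ⟨d, self_mem_cylinder _ d⟩
    obtain ⟨c, hc, hxc⟩ : ∃ c ∈ cylinder {a, b} d, x c ≠ 0 :=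
      exists_ne_zero_of_sum_ne_zero (by have := h_pair d; omega)
    exact ⟨c, hxc, by simpa [mem_cylinder] using hc⟩
  obtain ⟨c, hc, hca, hcb⟩ := h_meets fun _ ↦ false
  obtain ⟨d, hd, hda, hdb⟩ := h_meets fun v ↦ decide (v = a)
  have h_xor := xor_eq_of_isInformationSet hab (fun v hv ↦ h_info hv (ha v hv))
    (fun v hv ↦ h_info hv (hb v hv)) hc hd
  rw [← hca, ← hcb, ← hda, ← hdb] at h_xor
  simp [hab.symm] at h_xor

end InformationSet

section HierMat

open Finset

variable {N : ℕ} {F : Finset (Fin (N + 1))}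

lemma IsFacet.card_lt (hN : 3 ≤ N) (hF : IsFacet N F) : #F < N := by
  obtain rfl | ⟨h_card, -⟩ := hF
  · exact card_le_two.trans_lt hN
  · omega

lemma IsFacet.not_compl_singleton_subset (hN : 3 ≤ N) (hF : IsFacet N F) (v : Fin (N + 1)) :
    ¬ {v}ᶜ ⊆ F := fun h ↦ by
  have h_card := card_le_card h
  rw [card_compl, card_singleton, Fintype.card_fin] at h_card
  have := hF.card_lt hN
  omega

lemma IsFacet.not_pair_union_subset (hF : IsFacet N F) {v : Fin (N + 1)}
    (hv : v ∉ ({0, Fin.last N} : Finset (Fin (N + 1)))) : ¬ {0, Fin.last N} ∪ {v} ⊆ F := by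
  intro h
  obtain rfl | ⟨-, h_ends⟩ := hF
  · exact hv (h (by simp))
  · exact h_ends ⟨h (by simp), h (by simp)⟩

lemma isFacet_compl_pair {a b : Fin (N + 1)} (hab : b ≠ a)
    (ha : a ∈ ({0, Fin.last N} : Finset (Fin (N + 1)))) : IsFacet N {a, b}ᶜ := by
  refine Or.inr ⟨?_, ?_⟩
  · rw [card_compl, card_pair hab.symm, Fintype.card_fin]
    omega
  · obtain rfl | rfl : a = 0 ∨ a = Fin.last N := by simpa using ha
    all_goals simp

lemma hierMat_apply (hF : IsFacet N F) (d c : Fin (N + 1) → Bool) :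
    hierMat N ⟨⟨F, hF⟩, fun v ↦ d v⟩ c = if c ∈ cylinder F d then 1 else 0 :=
  if_congr (by simp [mem_cylinder]) rfl rfl

lemma hierMat_mulVec_apply (hF : IsFacet N F) (x : (Fin (N + 1) → Bool) → ℝ)
    (d : Fin (N + 1) → Bool) :
    (hierMat N).mulVec x ⟨⟨F, hF⟩, fun v ↦ d v⟩ = ∑ c ∈ cylinder F d, x c := by
  simp [Matrix.mulVec, dotProduct, hierMat_apply]

lemma hierMat_mulVec_eq_quarter_iff {x : (Fin (N + 1) → Bool) → ℝ} :
    (hierMat N).mulVec x = (hierMat N).mulVec (fun _ ↦ (1 / 4 : ℝ)) ↔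
      ∀ F, IsFacet N F → ∀ d, 4 * ∑ c ∈ cylinder F d, x c = #(cylinder F d) := by
  have h_entry {F : Finset (Fin (N + 1))} (hF : IsFacet N F) (d : Fin (N + 1) → Bool) :
      (hierMat N).mulVec x ⟨⟨F, hF⟩, fun v ↦ d v⟩ =
          (hierMat N).mulVec (fun _ ↦ (1 / 4 : ℝ)) ⟨⟨F, hF⟩, fun v ↦ d v⟩ ↔
        4 * ∑ c ∈ cylinder F d, x c = #(cylinder F d) := by
    rw [hierMat_mulVec_apply, hierMat_mulVec_apply, sum_const, nsmul_eq_mul, mul_one_div,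
      eq_div_iff four_ne_zero, mul_comm]
  refine ⟨fun h F hF d ↦ (h_entry hF d).1 (congrFun h _), fun h ↦ funext ?_⟩
  rintro ⟨⟨F, hF⟩, j⟩
  have h_row := (h_entry hF (fun v ↦ if hv : v ∈ F then j ⟨v, hv⟩ else false)).2 (h F hF _)
  simpa using h_row

lemma hierMat_mulVec_quarter_mem_mzSpan (hN : 3 ≤ N) :
    (hierMat N).mulVec (fun _ ↦ (1 / 4 : ℝ)) ∈ MZSpan (hierMat N) := by
  have : NeZero N := ⟨by omega⟩
  have h_middle : 1 < #({0, Fin.last N} : Finset (Fin (N + 1)))ᶜ := by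
    rw [card_compl, card_pair Fin.last_pos'.ne, Fintype.card_fin]
    omega
  obtain ⟨p, hp, q, hq, hpq⟩ := one_lt_card.1 h_middle
  rw [mem_compl] at hp hq
  obtain ⟨z, hz⟩ := exists_int_four_mul_sum_cylinder_eq_card Fin.last_pos'.ne hp hq hpq
  refine ⟨z, hierMat_mulVec_eq_quarter_iff.2 fun F hF d ↦ ?_⟩
  exact_mod_cast hz F (hF.not_compl_singleton_subset hN _) (hF.not_compl_singleton_subset hN _)
    (hF.not_pair_union_subset hp) (hF.not_pair_union_subset hq) d

lemma hierMat_mulVec_quarter_notMem_mnSpan (hN : 3 ≤ N) :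
    (hierMat N).mulVec (fun _ ↦ (1 / 4 : ℝ)) ∉ MNSpan (hierMat N) := by
  have : NeZero N := ⟨by omega⟩
  rintro ⟨x, hx⟩
  have h_marginal {F : Finset (Fin (N + 1))} (hF : IsFacet N F) (d : Fin (N + 1) → Bool) :
      4 * ∑ c ∈ cylinder F d, x c = #(cylinder F d) := by
    exact_mod_cast hierMat_mulVec_eq_quarter_iff.1 hx F hF d
  exact not_forall_four_mul_sum_cylinder_eq_card Fin.last_pos'.ne x
    (fun v hv ↦ h_marginal (isFacet_compl_pair hv (by simp)))
    (fun v hv ↦ h_marginal (isFacet_compl_pair hv (by simp))) (h_marginal (.inl rfl))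

lemma hierMat_mulVec_quarter_mem_mCone (N : ℕ) :
    (hierMat N).mulVec (fun _ ↦ (1 / 4 : ℝ)) ∈ MCone (hierMat N) :=
  ⟨_, fun _ ↦ by positivity, rfl⟩

end HierMat

/-- For `N ≥ 3`, the vector `b = (1/4) Σᵢ aᵢ` (sum over all columns of `A_C`) lies in
`ℤA_C ∩ ℝ≥0 A_C` but not in `ℕ A_C`; in particular `A_C` is not normal. -/
theorem hierMat_not_normal (N : ℕ) (hN : 3 ≤ N) :
    ((hierMat N).mulVec (fun _ => (1 / 4 : ℝ)) ∈ MZSpan (hierMat N) ∩ MCone (hierMat N) ∧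
      (hierMat N).mulVec (fun _ => (1 / 4 : ℝ)) ∉ MNSpan (hierMat N)) ∧
    ¬ MNormal (hierMat N) := by
  have h_mem : (hierMat N).mulVec (fun _ => (1 / 4 : ℝ)) ∈ MZSpan (hierMat N) ∩ MCone (hierMat N) :=
    ⟨hierMat_mulVec_quarter_mem_mzSpan hN, hierMat_mulVec_quarter_mem_mCone N⟩
  have h_notMem := hierMat_mulVec_quarter_notMem_mnSpan hN
  exact ⟨⟨h_mem, h_notMem⟩, fun h_normal ↦ h_notMem (h_normal.subset h_mem)⟩
end
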